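/- arXiv:2108.07751 — 3 statements merged into one kernel-verified Lean document; each statement's English description precedes it below -/
import Mathlib

section
/- Let R₁, …, Rₙ (n ≥ 2) be axis-aligned rectangles in ℝ², where Rᵢ = [ℓᵢ, rᵢ] × [bᵢ, tᵢ]. Then there exists a selection p₁, …, pₙ attaining the optimal value δ*_∞ for the L_∞ distance such that for every index i there are an index j and an integer k with 0 ≤ k ≤ n with x-coordinate of pᵢ equal to ℓⱼ + k·δ*_∞, and there are an index j' and an integer k' with 0 ≤ k' ≤ n with y-coordinate of pᵢ equal to b_{j'} + k'·δ*_∞. -/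
open Set

/-- The `L∞` distance on `ℝ²`. -/
noncomputable def dinf (p q : ℝ × ℝ) : ℝ := max |p.1 - q.1| |p.2 - q.2|

/-- The axis-aligned rectangle `[a,b] × [c,d]`. -/
def rect (a b c d : ℝ) : Set (ℝ × ℝ) := Set.Icc a b ×ˢ Set.Icc c d

/-- The minimum pairwise distance of the points `p 0, …, p (n-1)` with respect to
the distance function `d`. -/
noncomputable def minPairDist {n : ℕ} (d : (ℝ × ℝ) → (ℝ × ℝ) → ℝ)
    (p : Fin n → ℝ × ℝ) : ℝ :=
  sInf {x : ℝ | ∃ i j : Fin n, i ≠ j ∧ x = d (p i) (p j)}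

/-- The set of values of selections from the rectangles `R i`:
the minimum pairwise distance over selections, with respect to `d`. -/
noncomputable def selVals {n : ℕ} (d : (ℝ × ℝ) → (ℝ × ℝ) → ℝ)
    (R : Fin n → Set (ℝ × ℝ)) : Set ℝ :=
  {v : ℝ | ∃ p : Fin n → ℝ × ℝ, (∀ i, p i ∈ R i) ∧ v = minPairDist d p}

/-!
Among the selections maximising the minimum distance `δ`, take one minimising the sum of all
coordinates; it exists by compactness. No point of it can move left inside its rectangle without
coming closer than `δ` to another point. A point off its left side therefore touches a wall: it lies
exactly `δ` to the right of some other point. Following these walls leftwards visits points with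
strictly decreasing abscissae, so after fewer than `n` steps of length `δ` one arrives at a left
side. The same argument applies to the second coordinate.
-/

section Blocking

variable {ι α : Type*}

lemma exists_le_card_eq_add_nsmul [Fintype ι] [AddMonoid α] [LinearOrder α] {x a : ι → α} {δ : α}
    (hstep : ∀ i, x i = a i ∨ ∃ j, x j < x i ∧ x i = x j + δ) (i : ι) :
    ∃ j, ∃ k ≤ Finset.card {l | x l < x i}, x i = a j + k • δ := by
  induction hcard : Finset.card {l | x l < x i} using Nat.strong_induction_on generalizing i with
  | _ m ih =>
    rcases hstep i with hi | ⟨j, hlt, hi⟩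
    · exact ⟨i, 0, m.zero_le, by simpa using hi⟩
    · have hfewer : Finset.card {l | x l < x j} < m := by
        rw [← hcard]
        refine Finset.card_lt_card (Finset.ssubset_iff_of_subset ?_ |>.2 ⟨j, ?_, ?_⟩)
        · exact Finset.monotone_filter_right _ fun l _ hl => hl.trans hlt
        · simpa using hlt
        · simp
      obtain ⟨l, k, hk, hj⟩ := ih _ hfewer j rfl
      exact ⟨l, k + 1, hk.trans_lt hfewer, by rw [hi, hj, succ_nsmul, add_assoc]⟩

variable [AddCommGroup α] [LinearOrder α] [IsOrderedAddMonoid α]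

lemma eq_or_exists_eq_add_of_blocked {x : ι → α} {s : Set ι} (hs : s.Finite) {a b δ : α}
    (hab : a ≤ b) (hsep : ∀ j ∈ s, δ ≤ |b - x j|)
    (hblocked : ∀ t ∈ Ico a b, ∃ j ∈ s, |t - x j| < δ) :
    b = a ∨ ∃ j, x j < b ∧ b = x j + δ := by
  by_contra! ⟨hne, hwall⟩
  have hδ : 0 < δ := by
    obtain ⟨j, -, hj⟩ := hblocked a ⟨le_rfl, hab.lt_of_ne hne.symm⟩
    exact (abs_nonneg _).trans_lt hj
  -- Moving from `b` back to the rightmost stop `t < b` meets no obstacle, against `hblocked`.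
  let stops : Set α := insert a (image (fun j => x j + δ) {j ∈ s | x j + δ < b})
  have hstops : stops.Finite := ((hs.subset (sep_subset _ _)).image _).insert a
  obtain ⟨t, ht, hmax⟩ := exists_max_image stops id hstops ⟨a, mem_insert _ _⟩
  have htb : t < b := by
    rcases ht with rfl | ⟨j, hj, rfl⟩
    exacts [hab.lt_of_ne hne.symm, hj.2]
  obtain ⟨j, hjs, hj⟩ := hblocked t ⟨hmax a (mem_insert _ _), htb⟩
  obtain ⟨hj_left, hj_right⟩ := abs_sub_lt_iff.1 hj
  rcases le_abs'.1 (hsep j hjs) with hright | hleft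
  · exact hj_right.not_ge (by grind)
  · have hle : x j + δ ≤ b := le_sub_iff_add_le'.1 hleft
    have hlt : x j + δ < b := hle.lt_of_ne fun h => hwall j (by grind) h.symm
    have hjt : x j + δ ≤ t := hmax _ (mem_insert_of_mem _ ⟨j, ⟨hjs, hlt⟩, rfl⟩)
    exact hj_left.not_ge (le_sub_iff_add_le'.2 hjt)

lemma exists_lt_card_eq_add_nsmul_of_blocked [Fintype ι] {x a : ι → α} {δ : α} (s : ι → Set ι)
    (ha : ∀ i, a i ≤ x i) (hsep : ∀ i, ∀ j ∈ s i, δ ≤ |x i - x j|)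
    (hblocked : ∀ i, ∀ t ∈ Ico (a i) (x i), ∃ j ∈ s i, |t - x j| < δ) (i : ι) :
    ∃ j, ∃ k < Fintype.card ι, x i = a j + k • δ := by
  obtain ⟨j, k, hk, hi⟩ := exists_le_card_eq_add_nsmul
    (fun l => eq_or_exists_eq_add_of_blocked (s l).toFinite (ha l) (hsep l) (hblocked l)) i
  exact ⟨j, k, hk.trans_lt (Finset.card_lt_univ_of_notMem (x := i) (by simp)), hi⟩

end Blocking

section MinPairDist

lemma offDiag_univ_nonempty {ι : Type*} [Fintype ι] [Nontrivial ι] :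
    (Finset.univ : Finset ι).offDiag.Nonempty :=
  let ⟨i, j, hij⟩ := exists_pair_ne ι
  ⟨(i, j), by simpa using hij⟩

variable {n : ℕ} {d : ℝ × ℝ → ℝ × ℝ → ℝ}

lemma minPairDist_eq_inf' [Nontrivial (Fin n)] (p : Fin n → ℝ × ℝ) :
    minPairDist d p =
      Finset.univ.offDiag.inf' offDiag_univ_nonempty fun ij => d (p ij.1) (p ij.2) := by
  rw [Finset.inf'_eq_csInf_image, minPairDist]
  congr 1
  ext x
  simp [eq_comm]

lemma le_minPairDist_iff (hn : 2 ≤ n) {p : Fin n → ℝ × ℝ} {c : ℝ} :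
    c ≤ minPairDist d p ↔ ∀ i j, i ≠ j → c ≤ d (p i) (p j) := by
  have := Fin.nontrivial_iff_two_le.2 hn
  rw [minPairDist_eq_inf', Finset.le_inf'_iff]
  simp

lemma continuous_minPairDist (hd : Continuous (Function.uncurry d)) :
    Continuous fun p : Fin n → ℝ × ℝ => minPairDist d p := by
  rcases subsingleton_or_nontrivial (Fin n) with _ | _
  · have hconst (p : Fin n → ℝ × ℝ) : minPairDist d p = sInf ∅ :=
      congrArg sInf <| eq_empty_of_forall_notMem fun _ ⟨i, j, hij, _⟩ => hij (Subsingleton.elim i j)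
    simpa only [hconst] using continuous_const
  · simp only [minPairDist_eq_inf']
    exact Continuous.finset_inf'_apply offDiag_univ_nonempty fun ij _ =>
      hd.comp₂ (continuous_apply ij.1) (continuous_apply ij.2)

lemma minPairDist_le_update (hn : 2 ≤ n) (hd : ∀ z w, d z w = d w z) {p : Fin n → ℝ × ℝ}
    {i : Fin n} {z : ℝ × ℝ} (hz : ∀ j ≠ i, minPairDist d p ≤ d z (p j)) :
    minPairDist d p ≤ minPairDist d (Function.update p i z) := by
  refine (le_minPairDist_iff hn).2 fun a b hab => ?_
  rcases eq_or_ne a i with rfl | ha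
  · simpa [hab.symm] using hz b hab.symm
  rcases eq_or_ne b i with rfl | hb
  · simpa [ha, hd (p a)] using hz a ha
  · simpa [ha, hb] using (le_minPairDist_iff hn).1 le_rfl a b hab

end MinPairDist

/-- The selection `p` from the sets `R i` is optimal for the distance function `d` and, among the
optimal selections, minimises the total potential `∑ i, f (p i)`. The inequality
`minPairDist d p ≤ minPairDist d q` in `sum_le` says that `q` is optimal too. -/
structure IsLexOptimal {n : ℕ} (d : ℝ × ℝ → ℝ × ℝ → ℝ) (R : Fin n → Set (ℝ × ℝ))
    (f : ℝ × ℝ → ℝ) (p : Fin n → ℝ × ℝ) : Prop where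
  mem : ∀ i, p i ∈ R i
  minPairDist_le : ∀ q : Fin n → ℝ × ℝ, (∀ i, q i ∈ R i) → minPairDist d q ≤ minPairDist d p
  sum_le : ∀ q : Fin n → ℝ × ℝ, (∀ i, q i ∈ R i) → minPairDist d p ≤ minPairDist d q →
    ∑ i, f (p i) ≤ ∑ i, f (q i)

section LexOptimal

variable {n : ℕ} {d : ℝ × ℝ → ℝ × ℝ → ℝ} {R : Fin n → Set (ℝ × ℝ)} {f : ℝ × ℝ → ℝ}

lemma exists_isLexOptimal (hd : Continuous (Function.uncurry d)) (hf : Continuous f)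
    (hR : ∀ i, IsCompact (R i)) (hne : ∀ i, (R i).Nonempty) : ∃ p, IsLexOptimal d R f p := by
  have hcompact : IsCompact (univ.pi R) := isCompact_univ_pi hR
  have hcont := continuous_minPairDist (n := n) hd
  obtain ⟨p₀, hp₀, hmax⟩ := hcompact.exists_isMaxOn (univ_pi_nonempty_iff.2 hne) hcont.continuousOn
  have hoptimal : IsCompact (univ.pi R ∩ {q | minPairDist d p₀ ≤ minPairDist d q}) :=
    hcompact.inter_right (isClosed_le continuous_const hcont)
  obtain ⟨p, ⟨hp, hp₀p⟩, hmin⟩ := hoptimal.exists_isMinOn ⟨p₀, hp₀, le_refl (minPairDist d p₀)⟩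
    (f := fun q => ∑ i, f (q i)) (by fun_prop)
  exact ⟨p, fun i => hp i trivial, fun q hq => (hmax fun i _ => hq i).trans hp₀p,
    fun q hq hpq => hmin ⟨fun i _ => hq i, hp₀p.trans hpq⟩⟩

namespace IsLexOptimal

variable {p : Fin n → ℝ × ℝ}

lemma isGreatest_selVals (hp : IsLexOptimal d R f p) :
    IsGreatest (selVals d R) (minPairDist d p) := by
  refine ⟨⟨p, hp.mem, rfl⟩, ?_⟩
  rintro _ ⟨q, hq, rfl⟩
  exact hp.minPairDist_le q hq

lemma exists_lt_minPairDist (hp : IsLexOptimal d R f p) (hn : 2 ≤ n) (hd : ∀ z w, d z w = d w z)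
    {i : Fin n} {z : ℝ × ℝ} (hz : z ∈ R i) (hlt : f z < f (p i)) :
    ∃ j ≠ i, d z (p j) < minPairDist d p := by
  by_contra! hfar
  have hmem : ∀ j, Function.update p i z j ∈ R j :=
    (Function.forall_update_iff p fun j w => w ∈ R j).2 ⟨hz, fun j _ => hp.mem j⟩
  refine (hp.sum_le _ hmem (minPairDist_le_update hn hd hfar)).not_gt ?_
  refine Finset.sum_lt_sum (fun j _ => ?_) ⟨i, Finset.mem_univ i, by simpa using hlt⟩
  rcases eq_or_ne j i with rfl | hj
  · simpa using hlt.le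
  · simp [hj]

end IsLexOptimal

end LexOptimal

lemma dinf_comm (z w : ℝ × ℝ) : dinf z w = dinf w z := by
  simp only [dinf, abs_sub_comm]

lemma continuous_uncurry_dinf : Continuous (Function.uncurry dinf) := by
  unfold Function.uncurry dinf
  fun_prop

section Rectangles

variable {n : ℕ} {lo hi bo tp : Fin n → ℝ} {p : Fin n → ℝ × ℝ}

lemma isCompact_rect (a b c d : ℝ) : IsCompact (rect a b c d) :=
  isCompact_Icc.prod isCompact_Icc

lemma rect_nonempty {a b c d : ℝ} (hab : a ≤ b) (hcd : c ≤ d) : (rect a b c d).Nonempty :=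
  (nonempty_Icc.2 hab).prod (nonempty_Icc.2 hcd)

namespace IsLexOptimal

lemma exists_fst_eq_add_nsmul (hn : 2 ≤ n)
    (hp : IsLexOptimal dinf (fun i => rect (lo i) (hi i) (bo i) (tp i)) (fun z => z.1 + z.2) p)
    (i : Fin n) : ∃ j, ∃ k < n, (p i).1 = lo j + k • minPairDist dinf p := by
  have hsep := (le_minPairDist_iff hn (d := dinf) (p := p)).1 le_rfl
  simpa only [Fintype.card_fin] using
    exists_lt_card_eq_add_nsmul_of_blocked (x := fun i => (p i).1)
      (fun i => {j | j ≠ i ∧ |(p i).2 - (p j).2| < minPairDist dinf p})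
      (fun i => (hp.mem i).1.1)
      (fun i j hj => (le_max_iff.1 (hsep i j hj.1.symm)).resolve_right hj.2.not_ge)
      (fun i t ht => by
        obtain ⟨j, hji, hj⟩ := hp.exists_lt_minPairDist hn dinf_comm (z := (t, (p i).2))
          ⟨⟨ht.1, ht.2.le.trans (hp.mem i).1.2⟩, (hp.mem i).2⟩ (by simpa using ht.2)
        obtain ⟨hfst, hsnd⟩ := max_lt_iff.1 hj
        exact ⟨j, ⟨hji, hsnd⟩, hfst⟩) i

lemma exists_snd_eq_add_nsmul (hn : 2 ≤ n)
    (hp : IsLexOptimal dinf (fun i => rect (lo i) (hi i) (bo i) (tp i)) (fun z => z.1 + z.2) p)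
    (i : Fin n) : ∃ j, ∃ k < n, (p i).2 = bo j + k • minPairDist dinf p := by
  have hsep := (le_minPairDist_iff hn (d := dinf) (p := p)).1 le_rfl
  simpa only [Fintype.card_fin] using
    exists_lt_card_eq_add_nsmul_of_blocked (x := fun i => (p i).2)
      (fun i => {j | j ≠ i ∧ |(p i).1 - (p j).1| < minPairDist dinf p})
      (fun i => (hp.mem i).2.1)
      (fun i j hj => (le_max_iff.1 (hsep i j hj.1.symm)).resolve_left hj.2.not_ge)
      (fun i t ht => by
        obtain ⟨j, hji, hj⟩ := hp.exists_lt_minPairDist hn dinf_comm (z := ((p i).1, t))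
          ⟨(hp.mem i).1, ⟨ht.1, ht.2.le.trans (hp.mem i).2.2⟩⟩ (by simpa using ht.2)
        obtain ⟨hfst, hsnd⟩ := max_lt_iff.1 hj
        exact ⟨j, ⟨hji, hfst⟩, hsnd⟩) i

end IsLexOptimal

end Rectangles

theorem stmt3 (n : ℕ) (hn : 2 ≤ n) (lo hi bo tp : Fin n → ℝ)
    (hx : ∀ i, lo i ≤ hi i) (hy : ∀ i, bo i ≤ tp i) :
    ∃ p : Fin n → ℝ × ℝ,
      (∀ i, p i ∈ rect (lo i) (hi i) (bo i) (tp i)) ∧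
      IsGreatest (selVals dinf fun i => rect (lo i) (hi i) (bo i) (tp i))
        (minPairDist dinf p) ∧
      ∀ i : Fin n,
        (∃ j : Fin n, ∃ k : ℕ, k ≤ n ∧
          (p i).1 = lo j + (k : ℝ) * minPairDist dinf p) ∧
        (∃ j' : Fin n, ∃ k' : ℕ, k' ≤ n ∧
          (p i).2 = bo j' + (k' : ℝ) * minPairDist dinf p) := by
  obtain ⟨p, hp⟩ := exists_isLexOptimal (f := fun z => z.1 + z.2) continuous_uncurry_dinf
    (by fun_prop) (fun i => isCompact_rect (lo i) (hi i) (bo i) (tp i))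
    (fun i => rect_nonempty (hx i) (hy i))
  refine ⟨p, hp.mem, hp.isGreatest_selVals, fun i => ⟨?_, ?_⟩⟩
  · obtain ⟨j, k, hk, hfst⟩ := hp.exists_fst_eq_add_nsmul hn i
    exact ⟨j, k, hk.le, by rw [hfst, nsmul_eq_mul]⟩
  · obtain ⟨j, k, hk, hsnd⟩ := hp.exists_snd_eq_add_nsmul hn i
    exact ⟨j, k, hk.le, by rw [hsnd, nsmul_eq_mul]⟩
end

section
/- Let γ > 0 and let (i,j) and (i',j') be two distinct plus-anchors. Then for every point p in the plus-shape P_γ(i,j) and every point q in the plus-shape P_γ(i',j'), the L₁ distance satisfies d₁(p,q) ≥ 2γ. -/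
open Set

/-- The `L₁` distance on `ℝ²`. -/
noncomputable def d1 (p q : ℝ × ℝ) : ℝ := |p.1 - q.1| + |p.2 - q.2|

/-- The plus-shape with anchor grid point `(i,j)` in the grid with spacing `γ`. -/
def plusShape (γ : ℝ) (i j : ℤ) : Set (ℝ × ℝ) :=
  ({(i : ℝ) * γ} ×ˢ Set.Icc (((j : ℝ) - 1) * γ) (((j : ℝ) + 1) * γ)) ∪
  (Set.Icc (((i : ℝ) - 1) * γ) (((i : ℝ) + 1) * γ) ×ˢ {(j : ℝ) * γ})

/-- `(i,j)` is a plus-anchor if `i` is even and `i ≡ j (mod 4)`. -/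
def plusAnchor (i j : ℤ) : Prop := Even i ∧ i ≡ j [ZMOD 4]

/-!
The plus-shape at `(i, j)` lies in the closed `L₁` ball of radius `γ` about `(iγ, jγ)`, so it
suffices that distinct anchors are at `L₁` distance at least `4` in `ℤ²`. The anchors form a
lattice in `ℤ²`, so this says that a nonzero anchor `(a, b)` has `|a| + |b| ≥ 4`. Indeed
`|a| + |b|` is positive, and it is a multiple of `4` because changing the sign of an even number
does not change it modulo `4`.
-/

theorem d1_comm (p q : ℝ × ℝ) : d1 p q = d1 q p := by
  simp only [d1, abs_sub_comm]

theorem d1_triangle (p q r : ℝ × ℝ) : d1 p r ≤ d1 p q + d1 q r := by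
  have hfst := abs_sub_le p.1 q.1 r.1
  have hsnd := abs_sub_le p.2 q.2 r.2
  simp only [d1]
  linarith

theorem d1_le_add_d1_add {p q a b : ℝ × ℝ} {r s : ℝ} (hp : d1 p a ≤ r) (hq : d1 q b ≤ s) :
    d1 a b ≤ r + d1 p q + s :=
  calc
    d1 a b ≤ d1 a p + d1 p b := d1_triangle a p b
    _ ≤ d1 a p + (d1 p q + d1 q b) := by gcongr; exact d1_triangle p q b
    _ = d1 p a + d1 p q + d1 q b := by rw [d1_comm a p, add_assoc]
    _ ≤ r + d1 p q + s := by gcongr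

/-- The point `(iγ, jγ)` of the square grid with spacing `γ`, the centre of `plusShape γ i j`. -/
def gridPoint (γ : ℝ) (i j : ℤ) : ℝ × ℝ := (i * γ, j * γ)

theorem d1_gridPoint (γ : ℝ) (i j i' j' : ℤ) :
    d1 (gridPoint γ i j) (gridPoint γ i' j') = ((|i - i'| + |j - j'| : ℤ) : ℝ) * |γ| := by
  simp only [d1, gridPoint, ← sub_mul, abs_mul]
  push_cast
  ring

theorem d1_gridPoint_le_of_mem_plusShape {γ : ℝ} {i j : ℤ} {p : ℝ × ℝ}
    (hp : p ∈ plusShape γ i j) : d1 p (gridPoint γ i j) ≤ γ := by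
  rcases hp with ⟨hx : p.1 = i * γ, hy⟩ | ⟨hx, hy : p.2 = j * γ⟩
  · have hdist : |p.2 - j * γ| ≤ γ := abs_le.2 ⟨by linarith [hy.1], by linarith [hy.2]⟩
    simpa only [d1, gridPoint, hx, sub_self, abs_zero, zero_add] using hdist
  · have hdist : |p.1 - i * γ| ≤ γ := abs_le.2 ⟨by linarith [hx.1], by linarith [hx.2]⟩
    simpa only [d1, gridPoint, hy, sub_self, abs_zero, add_zero] using hdist

namespace plusAnchor

variable {i j i' j' : ℤ}

theorem sub (h : plusAnchor i j) (h' : plusAnchor i' j') : plusAnchor (i - i') (j - j') :=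
  ⟨h.1.sub h'.1, h.2.sub h'.2⟩

theorem four_dvd_abs_add_abs (h : plusAnchor i j) : 4 ∣ |i| + |j| := by
  obtain ⟨⟨k, rfl⟩, hmod⟩ := h
  have hdvd : 4 ∣ j - (k + k) := hmod.dvd
  rcases abs_choice (k + k) with hi | hi <;> rcases abs_choice j with hj | hj <;>
    rw [hi, hj] <;> omega

theorem four_le_abs_sub_add_abs_sub (h : plusAnchor i j) (h' : plusAnchor i' j')
    (hne : (i, j) ≠ (i', j')) : 4 ≤ |i - i'| + |j - j'| := by
  have hpos : 0 < |i - i'| + |j - j'| := by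
    by_cases hi : i = i'
    · have hj : j ≠ j' := fun hj => hne (Prod.ext hi hj)
      exact add_pos_of_nonneg_of_pos (abs_nonneg _) (abs_sub_pos.2 hj)
    · exact add_pos_of_pos_of_nonneg (abs_sub_pos.2 hi) (abs_nonneg _)
  exact Int.le_of_dvd hpos (h.sub h').four_dvd_abs_add_abs

end plusAnchor

theorem stmt4 (γ : ℝ) (hγ : 0 < γ) (i j i' j' : ℤ)
    (h : plusAnchor i j) (h' : plusAnchor i' j') (hne : (i, j) ≠ (i', j'))
    (p q : ℝ × ℝ) (hp : p ∈ plusShape γ i j) (hq : q ∈ plusShape γ i' j') :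
    2 * γ ≤ d1 p q := by
  have hanchors : (4 : ℝ) ≤ (|i - i'| + |j - j'| : ℤ) :=
    mod_cast h.four_le_abs_sub_add_abs_sub h' hne
  have hcentres : 4 * γ ≤ d1 (gridPoint γ i j) (gridPoint γ i' j') := by
    rw [d1_gridPoint, abs_of_pos hγ]
    gcongr
  have hshapes : d1 (gridPoint γ i j) (gridPoint γ i' j') ≤ γ + d1 p q + γ :=
    d1_le_add_d1_add (d1_gridPoint_le_of_mem_plusShape hp) (d1_gridPoint_le_of_mem_plusShape hq)
  linarith
end

section
/- Let γ > 0 and let U be the union of the L-shapes L_γ(i,j) over all L-anchors (i,j). Then every nonempty axis-aligned rectangle r ⊆ ℝ² that is disjoint from U is contained in one of the following blocks, for some integers a, b: [aγ, (a+3)γ] × [bγ, (b+1)γ], or [aγ, (a+1)γ] × [bγ, (b+3)γ]. -/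
open Set

/-- The L-shape with anchor grid point `(i,j)` in the grid with spacing `γ`. -/
def lShape (γ : ℝ) (i j : ℤ) : Set (ℝ × ℝ) :=
  ({(i : ℝ) * γ} ×ˢ Set.Icc ((j : ℝ) * γ) (((j : ℝ) + 1) * γ)) ∪
  (Set.Icc ((i : ℝ) * γ) (((i : ℝ) + 1) * γ) ×ˢ {(j : ℝ) * γ})

/-- `(i,j)` is an L-anchor if `i ≡ j (mod 3)`. -/
def lAnchor (i j : ℤ) : Prop := i ≡ j [ZMOD 3]

/-!
Every vertex of the grid `γℤ²` lies on some L-shape, so the two sides of a rectangle avoiding the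
L-shapes cannot both contain a multiple of `γ`. If the vertical side contains none, the rectangle
lies in a row `ℝ × [bγ, (b + 1)γ]`; the L-shapes anchored in that row cut it completely at
each vertical line `x = iγ` with `i ≡ b (mod 3)`, so the rectangle lies between two consecutive
such lines. The other case follows by reflection in the diagonal, which permutes the L-shapes.
-/

theorem exists_Icc_subset_of_forall_add_zsmul_notMem {G : Type*} [AddCommGroup G] [LinearOrder G]
    [IsOrderedAddMonoid G] [Archimedean G] {p : G} (hp : 0 < p) (c : G) {x₁ x₂ : G}
    (h : ∀ k : ℤ, c + k • p ∉ Icc x₁ x₂) :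
    ∃ k : ℤ, Icc x₁ x₂ ⊆ Icc (c + k • p) (c + (k + 1) • p) := by
  obtain ⟨k, ⟨hk_le, hk_lt⟩, -⟩ := existsUnique_sub_zsmul_mem_Ico hp x₁ c
  have left_le : c + k • p ≤ x₁ := le_sub_iff_add_le.mp hk_le
  have lt_right : x₁ < c + (k + 1) • p := by
    rw [add_one_zsmul, add_comm (k • p), ← add_assoc]
    exact sub_lt_iff_lt_add.mp hk_lt
  have right_lt : x₂ < c + (k + 1) • p := by
    by_contra! hle
    exact h (k + 1) ⟨lt_right.le, hle⟩
  exact ⟨k, Icc_subset_Icc left_le right_lt.le⟩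

/-- The union of all L-shapes anchored at L-anchors: the set that rectangles have to avoid. -/
def lUnion (γ : ℝ) : Set (ℝ × ℝ) :=
  ⋃ (ij : ℤ × ℤ) (_ : lAnchor ij.1 ij.2), lShape γ ij.1 ij.2

section

variable {γ x₁ x₂ y₁ y₂ : ℝ} {i j : ℤ}

theorem mem_lUnion {p : ℝ × ℝ} : p ∈ lUnion γ ↔ ∃ i j : ℤ, lAnchor i j ∧ p ∈ lShape γ i j := by
  simp only [lUnion, mem_iUnion, Prod.exists, exists_prop]

theorem swap_mem_lShape {p : ℝ × ℝ} : p.swap ∈ lShape γ i j ↔ p ∈ lShape γ j i := by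
  simp only [lShape, mem_union, mem_prod, Prod.fst_swap, Prod.snd_swap]
  tauto

theorem preimage_swap_lUnion (γ : ℝ) : Prod.swap ⁻¹' lUnion γ = lUnion γ := by
  ext p
  simp only [mem_preimage, mem_lUnion, swap_mem_lShape]
  rw [exists_comm]
  simp only [lAnchor, Int.modEq_comm]

theorem mem_lUnion_of_mem_vertical (hij : lAnchor i j) {y : ℝ}
    (hy : y ∈ Icc ((j : ℝ) * γ) (((j : ℝ) + 1) * γ)) : ((i : ℝ) * γ, y) ∈ lUnion γ :=
  mem_lUnion.mpr ⟨i, j, hij, Or.inl ⟨rfl, hy⟩⟩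

theorem mem_lUnion_of_mem_horizontal (hij : lAnchor i j) {x : ℝ}
    (hx : x ∈ Icc ((i : ℝ) * γ) (((i : ℝ) + 1) * γ)) : (x, (j : ℝ) * γ) ∈ lUnion γ :=
  mem_lUnion.mpr ⟨i, j, hij, Or.inr ⟨hx, rfl⟩⟩

theorem gridPoint_mem_lUnion (hγ : 0 ≤ γ) (i j : ℤ) :
    ((i : ℝ) * γ, (j : ℝ) * γ) ∈ lUnion γ := by
  have anchor_cases : lAnchor i j ∨ lAnchor i (j - 1) ∨ lAnchor (i - 1) j := by
    unfold lAnchor Int.ModEq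
    omega
  rcases anchor_cases with corner | top | right
  · exact mem_lUnion_of_mem_vertical corner ⟨le_rfl, by linarith⟩
  · exact mem_lUnion_of_mem_vertical top (by push_cast; constructor <;> linarith)
  · exact mem_lUnion_of_mem_horizontal right (by push_cast; constructor <;> linarith)

theorem preimage_swap_rect (a b c d : ℝ) : Prod.swap ⁻¹' rect a b c d = rect c d a b :=
  preimage_swap_prod _ _

theorem rect_subset_rect_swap {a b c d : ℝ} :
    rect y₁ y₂ x₁ x₂ ⊆ rect c d a b ↔ rect x₁ x₂ y₁ y₂ ⊆ rect a b c d := by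
  rw [← preimage_swap_rect x₁, ← preimage_swap_rect a,
    Prod.swap_surjective.preimage_subset_preimage_iff]

theorem disjoint_rect_lUnion_swap :
    Disjoint (rect y₁ y₂ x₁ x₂) (lUnion γ) ↔ Disjoint (rect x₁ x₂ y₁ y₂) (lUnion γ) := by
  rw [← disjoint_preimage_iff Prod.swap_surjective, preimage_swap_rect, preimage_swap_lUnion]

theorem forall_notMem_Icc_or_of_disjoint_lUnion (hγ : 0 ≤ γ)
    (hdisj : Disjoint (rect x₁ x₂ y₁ y₂) (lUnion γ)) :
    (∀ i : ℤ, (i : ℝ) * γ ∉ Icc x₁ x₂) ∨ ∀ j : ℤ, (j : ℝ) * γ ∉ Icc y₁ y₂ := by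
  by_contra! ⟨⟨i, hi⟩, j, hj⟩
  exact disjoint_left.mp hdisj ⟨hi, hj⟩ (gridPoint_mem_lUnion hγ i j)

theorem exists_rect_subset_horizontal_block (hγ : 0 < γ) (hy : y₁ ≤ y₂)
    (hdisj : Disjoint (rect x₁ x₂ y₁ y₂) (lUnion γ))
    (hrow : ∀ j : ℤ, (j : ℝ) * γ ∉ Icc y₁ y₂) :
    ∃ a b : ℤ, rect x₁ x₂ y₁ y₂ ⊆
      rect ((a : ℝ) * γ) (((a : ℝ) + 3) * γ) ((b : ℝ) * γ) (((b : ℝ) + 1) * γ) := by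
  obtain ⟨b, hb⟩ : ∃ b : ℤ, Icc y₁ y₂ ⊆ Icc ((b : ℝ) * γ) (((b : ℝ) + 1) * γ) := by
    simpa using exists_Icc_subset_of_forall_add_zsmul_notMem hγ 0 (by simpa using hrow)
  have avoids_cuts (k : ℤ) : (b : ℝ) * γ + k • (3 * γ) ∉ Icc x₁ x₂ := by
    intro hk
    have anchor : lAnchor (b + 3 * k) b := by simp [lAnchor, Int.ModEq]
    have cut := mem_lUnion_of_mem_vertical anchor (hb (left_mem_Icc.mpr hy))
    have cut_eq : ((b + 3 * k : ℤ) : ℝ) * γ = b * γ + k • (3 * γ) := by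
      push_cast [zsmul_eq_mul]
      ring
    rw [cut_eq] at cut
    exact disjoint_left.mp hdisj ⟨hk, left_mem_Icc.mpr hy⟩ cut
  obtain ⟨k, hk⟩ :=
    exists_Icc_subset_of_forall_add_zsmul_notMem (by positivity : 0 < 3 * γ) _ avoids_cuts
  refine ⟨b + 3 * k, b, prod_mono (hk.trans_eq ?_) hb⟩
  push_cast [zsmul_eq_mul]
  congr 1 <;> ring

end

theorem stmt8 (γ : ℝ) (hγ : 0 < γ) (x1 x2 y1 y2 : ℝ) (hx : x1 ≤ x2) (hy : y1 ≤ y2)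
    (hdisj : Disjoint (rect x1 x2 y1 y2)
      (⋃ (ij : ℤ × ℤ) (_ : lAnchor ij.1 ij.2), lShape γ ij.1 ij.2)) :
    ∃ a b : ℤ,
      rect x1 x2 y1 y2 ⊆
        rect ((a : ℝ) * γ) (((a : ℝ) + 3) * γ) ((b : ℝ) * γ) (((b : ℝ) + 1) * γ) ∨
      rect x1 x2 y1 y2 ⊆
        rect ((a : ℝ) * γ) (((a : ℝ) + 1) * γ) ((b : ℝ) * γ) (((b : ℝ) + 3) * γ) := by
  change Disjoint _ (lUnion γ) at hdisj
  rcases forall_notMem_Icc_or_of_disjoint_lUnion hγ.le hdisj with hcolumn | hrow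
  · obtain ⟨b, a, hblock⟩ := exists_rect_subset_horizontal_block hγ hx
      (disjoint_rect_lUnion_swap.mpr hdisj) hcolumn
    exact ⟨a, b, Or.inr (rect_subset_rect_swap.mp hblock)⟩
  · obtain ⟨a, b, hblock⟩ := exists_rect_subset_horizontal_block hγ hy hdisj hrow
    exact ⟨a, b, Or.inl hblock⟩
end
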